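/- The point p₁ is the unique nontrivial fixed point of the Ward-constrained melonic flow with vanishing anomalous dimension: if m̄² ≠ −1, ḡ ≠ 0, (1+m̄²)⁵ − Ω′(ḡ,m̄²) ≠ 0, η(ḡ,m̄²) = 0, β_m(ḡ,m̄²) = 0 and β_g(ḡ,m̄²) = 0, then m̄² = 5/4 and ḡ = −81/(64π²). -/

import Mathlib

open Real

/-- `Ω(ḡ, m̄²) := (1 + m̄²)² − π²ḡ`. -/
noncomputable def Omega (g m : ℝ) : ℝ := (1 + m) ^ 2 - π ^ 2 * g

/-- `Ω′(ḡ, m̄²) := π²ḡ(1+m̄²)³(1 − 8/(3(1+m̄²)²)) + 6π⁴ḡ²`. -/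
noncomputable def OmegaP (g m : ℝ) : ℝ :=
  π ^ 2 * g * (1 + m) ^ 3 * (1 - 8 / (3 * (1 + m) ^ 2)) + 6 * π ^ 4 * g ^ 2

/-- The Ward-constrained melonic anomalous dimension
`η(ḡ, m̄²) := 4π²ḡ((1+m̄²)³ + 9π²ḡ) / ((1+m̄²)⁵ − Ω′(ḡ, m̄²))`. -/
noncomputable def eta (g m : ℝ) : ℝ :=
  4 * π ^ 2 * g * ((1 + m) ^ 3 + 9 * π ^ 2 * g) / ((1 + m) ^ 5 - OmegaP g m)

/-- `β_m = −(2+η)m̄² − 10π²ḡ(1+η/6)/(1+m̄²)²` for the Ward-constrained melonic flow. -/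
noncomputable def betaM (g m : ℝ) : ℝ :=
  -(2 + eta g m) * m - 10 * π ^ 2 * g * (1 + eta g m / 6) / (1 + m) ^ 2

/-- `β_g = −ηḡΩ/(1+m̄²)² + 2π²ḡ²β_m/(1+m̄²)³` for the Ward-constrained melonic flow. -/
noncomputable def betaG (g m : ℝ) : ℝ :=
  -eta g m * g * Omega g m / (1 + m) ^ 2 + 2 * π ^ 2 * g ^ 2 * betaM g m / (1 + m) ^ 3

/-- `p₁` is the unique nontrivial fixed point of the Ward-constrained melonic flow
with vanishing anomalous dimension. -/
theorem p1_unique_eta_zero_fixed_point (g m : ℝ) (hm : m ≠ -1) (hg : g ≠ 0)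
    (hden : (1 + m) ^ 5 - OmegaP g m ≠ 0)
    (hη : eta g m = 0) (hβm : betaM g m = 0) (hβg : betaG g m = 0) :
    m = 5 / 4 ∧ g = -81 / (64 * π ^ 2) := by
  have h1 : (1 + m) ≠ 0 := fun h => hm (by linarith)
  have hpi : π ≠ 0 := Real.pi_ne_zero
  have h2 : (1 + m) ^ 3 + 9 * π ^ 2 * g = 0 := by
    unfold eta at hη
    rcases div_eq_zero_iff.mp hη with h | h
    · rcases mul_eq_zero.mp h with h | h
      · exact absurd h (by positivity)
      · exact h
    · exact absurd h hden
  have h3 : -2 * m * (1 + m) ^ 2 - 10 * π ^ 2 * g = 0 := by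
    unfold betaM at hβm
    rw [hη] at hβm
    field_simp at hβm
    linarith
  have h4 : (1 + m) ^ 2 * (8 * m - 10) = 0 := by
    linear_combination (-9) * h3 - 10 * h2
  have h5 : m = 5 / 4 := by
    rcases mul_eq_zero.mp h4 with h | h
    · exact absurd h (pow_ne_zero 2 h1)
    · linarith
  refine ⟨h5, ?_⟩
  subst h5
  rw [eq_div_iff (by positivity)]
  linarith
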